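/- Let m = pq where p and q are distinct odd primes, and let n be a positive integer. Then the crown C_m ⊙ K̄_n is perfect edge-magic: for every integer k with 2mn + (5m+3)/2 ≤ k ≤ 4mn + (7m+3)/2 there exists an edge-magic labeling of C_m ⊙ K̄_n with valence k. -/

import Mathlib

/-- An edge-magic labeling of a finite graph presented by an endpoint map
`ends : E → V × V` (loops and multiple edges allowed): the vertex labels `fv`
and edge labels `fe` together form a bijection onto `{1, …, |V| + |E|}` and
every edge `e` satisfies `fv (ends e).1 + fe e + fv (ends e).2 = k`.
The constant `k` is the valence. -/
def IsEdgeMagic {V E : Type} [Fintype V] [Fintype E] (ends : E → V × V)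
    (fv : V → ℕ) (fe : E → ℕ) (k : ℕ) : Prop :=
  Function.Injective (Sum.elim fv fe) ∧
  Set.range (Sum.elim fv fe) = Set.Icc 1 (Fintype.card V + Fintype.card E) ∧
  ∀ e : E, fv (ends e).1 + fe e + fv (ends e).2 = k

/-- A super edge-magic labeling: edge-magic, and moreover the vertex labels
are exactly `{1, …, |V|}`. -/
def IsSuperEdgeMagic {V E : Type} [Fintype V] [Fintype E] (ends : E → V × V)
    (fv : V → ℕ) (fe : E → ℕ) (k : ℕ) : Prop :=
  IsEdgeMagic ends fv fe k ∧ Set.range fv = Set.Icc 1 (Fintype.card V)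

/-- The cycle `C_m`: vertices `Fin m`, edge `i` joins `i` to `i+1 (mod m)`. -/
def cycleEnds (m : ℕ) : Fin m → Fin m × Fin m :=
  fun i => (i, ⟨(i.val + 1) % m, Nat.mod_lt _ i.pos⟩)

/-- The crown `C_m ⊙ K̄_n`: vertices are `Sum.inl i` (cycle vertices `v_i`) and
`Sum.inr (i, j)` (pendant vertices `v_i^j`); edges are the `m` cycle edges and
the `m * n` pendant edges. -/
def crownEnds (m n : ℕ) :
    (Fin m ⊕ Fin m × Fin n) → (Fin m ⊕ Fin m × Fin n) × (Fin m ⊕ Fin m × Fin n)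
  | Sum.inl i => (Sum.inl i, Sum.inl ⟨(i.val + 1) % m, Nat.mod_lt _ i.pos⟩)
  | Sum.inr p => (Sum.inl p.1, Sum.inr p)

/-- The graph `K_{1,n}^l`: the star `K_{1,n}` (center `none`, leaves `some j`)
with a loop (edge `none`) attached at the center. -/
def starLoopEnds (n : ℕ) : Option (Fin n) → Option (Fin n) × Option (Fin n)
  | none => (none, none)
  | some j => (none, some j)

/-!
Arrange the numbers `1, …, m(n+1)` in `n + 1` rows of length `m`. Take a super edge-magic labeling
of `C_m`, identify its vertices with the columns, put each cycle vertex into some row of its column,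
and let the leaves of `v_i` fill the rest of the column of `v_{i+1}`. The labels at the other ends
of the edges from `v_i` to `v_{i+1}` and to its leaves are then a whole column, so the `n + 1`
corresponding edge sums form a progression of difference `m`, in a residue class mod `m` that
determines `i`. Raising `v_i` by one row shifts its progression by `m`; hence the rows can be chosen
so that the `m` progressions tile any of `mn + 1` intervals of length `m(n+1)`, each shifted by `1`
from the one before, which gives `mn + 1` consecutive super edge-magic valences.

The remaining valences come from two classical transformations: complementing an edge-magic
labeling, and, for as many vertices as edges, turning a super edge-magic labeling into one whose
vertices receive exactly the odd, or exactly the even, labels.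
-/

open Set

section Labelings

variable {V E : Type} [Fintype V] [Fintype E] {ends : E → V × V} {fv : V → ℕ} {fe : E → ℕ}
  {k k' : ℕ}

theorem range_eq_Icc_card_of_injective {f : V → ℕ} (hf : Function.Injective f)
    (hmem : ∀ v, f v ∈ Icc 1 (Fintype.card V)) : range f = Icc 1 (Fintype.card V) := by
  refine eq_of_subset_of_ncard_le (range_subset_iff.2 hmem) ?_ (finite_Icc _ _)
  rw [← image_univ, ncard_image_of_injective _ hf, ncard_univ, Nat.card_eq_fintype_card,
    ncard_eq_toFinset_card', toFinset_Icc, Nat.card_Icc, Nat.add_sub_cancel]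

theorem IsEdgeMagic.of_injective (hinj : Function.Injective (Sum.elim fv fe))
    (hmem : ∀ x, Sum.elim fv fe x ∈ Icc 1 (Fintype.card V + Fintype.card E))
    (hk : ∀ e, fv (ends e).1 + fe e + fv (ends e).2 = k) : IsEdgeMagic ends fv fe k := by
  rw [← Fintype.card_sum] at hmem
  refine ⟨hinj, ?_, hk⟩
  rw [← Fintype.card_sum, range_eq_Icc_card_of_injective hinj hmem]

theorem IsEdgeMagic.label_mem_Icc (h : IsEdgeMagic ends fv fe k) (x : V ⊕ E) :
    Sum.elim fv fe x ∈ Icc 1 (Fintype.card V + Fintype.card E) :=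
  h.2.1 ▸ mem_range_self x

theorem IsEdgeMagic.complement (h : IsEdgeMagic ends fv fe k)
    (hk : k + k' = 3 * (Fintype.card V + Fintype.card E + 1)) :
    IsEdgeMagic ends (fun v => Fintype.card V + Fintype.card E + 1 - fv v)
      (fun e => Fintype.card V + Fintype.card E + 1 - fe e) k' := by
  have hcomp := Sum.comp_elim (fun a => Fintype.card V + Fintype.card E + 1 - a) fv fe
  simp only [Function.comp_def] at hcomp
  refine .of_injective ?_ ?_ fun e => ?_
  · rw [← hcomp]
    intro x y hxy
    have hx := h.label_mem_Icc x
    have hy := h.label_mem_Icc y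
    simp only [mem_Icc] at hx hy hxy
    exact h.1 (by omega)
  · rw [← hcomp]
    intro x
    have hx := h.label_mem_Icc x
    simp only [mem_Icc] at hx ⊢
    omega
  · have hu := h.label_mem_Icc (.inl (ends e).1)
    have hv := h.label_mem_Icc (.inl (ends e).2)
    have he := h.label_mem_Icc (.inr e)
    have hsum := h.2.2 e
    simp only [mem_Icc, Sum.elim_inl, Sum.elim_inr] at hu hv he
    omega

theorem IsSuperEdgeMagic.of_injective (hv : Function.Injective fv) (he : Function.Injective fe)
    (hvmem : ∀ v, fv v ∈ Ioc 0 (Fintype.card V))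
    (hemem : ∀ e, fe e ∈ Ioc (Fintype.card V) (Fintype.card V + Fintype.card E))
    (hk : ∀ e, fv (ends e).1 + fe e + fv (ends e).2 = k) : IsSuperEdgeMagic ends fv fe k := by
  refine ⟨.of_injective (hv.sumElim he fun v e => ?_) ?_ hk,
    range_eq_Icc_card_of_injective hv hvmem⟩
  · exact ((hvmem v).2.trans_lt (hemem e).1).ne
  · rintro (v | e)
    · exact ⟨(hvmem v).1, (hvmem v).2.trans (Nat.le_add_right _ _)⟩
    · exact ⟨(Nat.zero_le _).trans_lt (hemem e).1, (hemem e).2⟩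

namespace IsSuperEdgeMagic

theorem injective_vertex (h : IsSuperEdgeMagic ends fv fe k) : Function.Injective fv :=
  h.1.1.comp Sum.inl_injective

theorem injective_edge (h : IsSuperEdgeMagic ends fv fe k) : Function.Injective fe :=
  h.1.1.comp Sum.inr_injective

theorem vertex_mem_Ioc (h : IsSuperEdgeMagic ends fv fe k) (v : V) :
    fv v ∈ Ioc 0 (Fintype.card V) :=
  h.2.subset (mem_range_self v)

theorem edge_mem_Ioc (h : IsSuperEdgeMagic ends fv fe k) (e : E) :
    fe e ∈ Ioc (Fintype.card V) (Fintype.card V + Fintype.card E) := by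
  obtain ⟨hpos, hle⟩ := h.1.label_mem_Icc (.inr e)
  refine ⟨lt_of_not_ge fun hsmall => ?_, hle⟩
  obtain ⟨v, hv⟩ : fe e ∈ range fv := h.2 ▸ ⟨hpos, hsmall⟩
  exact Sum.inl_ne_inr (h.1.1 (a₁ := .inl v) (a₂ := .inr e) hv)

theorem odd_vertex (h : IsSuperEdgeMagic ends fv fe k) (hEV : Fintype.card E ≤ Fintype.card V)
    (hVE : Fintype.card V ≤ Fintype.card E + 1) (hk : k' + 2 * (Fintype.card V + 1) = 2 * k) :
    IsEdgeMagic ends (fun v => 2 * fv v - 1) (fun e => 2 * (fe e - Fintype.card V)) k' := by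
  have hv := h.vertex_mem_Ioc
  have he := h.edge_mem_Ioc
  simp only [mem_Ioc] at hv he
  refine .of_injective (Function.Injective.sumElim ?_ ?_ ?_) ?_ fun e => ?_
  · exact fun u v huv => h.injective_vertex (by grind)
  · exact fun e e' hee => h.injective_edge (by grind)
  · grind
  · rintro (v | e) <;> simp only [Sum.elim_inl, Sum.elim_inr, mem_Icc] <;> grind
  · have hsum := h.1.2.2 e
    grind

theorem even_vertex (h : IsSuperEdgeMagic ends fv fe k) (hVE : Fintype.card V ≤ Fintype.card E)
    (hEV : Fintype.card E ≤ Fintype.card V + 1) (hk : k' + 2 * Fintype.card V + 1 = 2 * k) :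
    IsEdgeMagic ends (fun v => 2 * fv v) (fun e => 2 * (fe e - Fintype.card V) - 1) k' := by
  have hv := h.vertex_mem_Ioc
  have he := h.edge_mem_Ioc
  simp only [mem_Ioc] at hv he
  refine .of_injective (Function.Injective.sumElim ?_ ?_ ?_) ?_ fun e => ?_
  · exact fun u v huv => h.injective_vertex (by grind)
  · exact fun e e' hee => h.injective_edge (by grind)
  · grind
  · rintro (v | e) <;> simp only [Sum.elim_inl, Sum.elim_inr, mem_Icc] <;> grind
  · have hsum := h.1.2.2 e
    grind

end IsSuperEdgeMagic

end Labelings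

section Grid

variable {ι : Type*} {a l m n x : ℕ}

/-- The label of the cell in column `i` and row `d` of a grid whose bottom row is labeled by `g`
and in which each row exceeds the one below it by `m`. Rows are numbered `0, …, n`. -/
def gridLabel (m : ℕ) (g : ι → ℕ) (c : ι × Fin (n + 1)) : ℕ :=
  g c.1 + m * c.2

theorem gridLabel_injective {g : ι → ℕ} (hg : Function.Injective g)
    (hmem : ∀ i, g i ∈ Ioc a (a + m)) :
    Function.Injective (gridLabel m g : ι × Fin (n + 1) → ℕ) := by
  rintro ⟨i, d⟩ ⟨i', d'⟩ heq
  have hm : 0 < m := by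
    have := hmem i
    grind
  simp only [gridLabel] at heq
  have hmod : g i % m = g i' % m := by
    simpa only [Nat.add_mul_mod_self_left] using congrArg (· % m) heq
  have hbase : g i = g i' :=
    Nat.mod_injOn_Ico (a + 1) m (by grind) (by grind) hmod
  have hrow : d.val = d' := by
    rw [hbase, add_right_inj] at heq
    exact Nat.eq_of_mul_eq_mul_left hm heq
  exact Prod.ext (hg hbase) (Fin.ext hrow)

theorem gridLabel_mem_Ioc {g : ι → ℕ} (hmem : ∀ i, g i ∈ Ioc a (a + m))
    (c : ι × Fin (n + 1)) : gridLabel m g c ∈ Ioc a (a + m * (n + 1)) := by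
  have hrow : m * c.2 ≤ m * n := Nat.mul_le_mul_left m c.2.is_le
  have hcol := hmem c.1
  simp only [gridLabel, mem_Ioc, mul_add_one] at hcol ⊢
  omega

theorem exists_add_mul_eq_add (hx : x ∈ Ioc a (a + m)) (hl : l ≤ m * n) :
    ∃ y ∈ Ioc a (a + m), ∃ d : Fin (n + 1), y + m * d = x + l := by
  obtain ⟨hax, hxa⟩ := hx
  have hm : 0 < m := by omega
  have hdiv := Nat.mod_add_div (x + l - (a + 1)) m
  have hmod := Nat.mod_lt (x + l - (a + 1)) hm
  have hrow : (x + l - (a + 1)) / m < n + 1 := by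
    rw [Nat.div_lt_iff_lt_mul hm, mul_comm, mul_add_one]
    omega
  refine ⟨a + 1 + (x + l - (a + 1)) % m, ⟨by omega, by omega⟩, ⟨_, hrow⟩, ?_⟩
  simp only
  omega

/-- Distributes the disjoint union of stars `K_{1,n}` with centers `i : ι` over the cells of a grid
with `n + 1` rows: the star at `i` fills column `i`, its center being put into row `p i`. -/
def starCell (p : ι → Fin (n + 1)) : ι ⊕ ι × Fin n → ι × Fin (n + 1)
  | .inl i => (i, p i)
  | .inr (i, j) => (i, (p i).succAbove j)

theorem starCell_injective (p : ι → Fin (n + 1)) : Function.Injective (starCell p) := by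
  rintro (i | ⟨i, j⟩) (i' | ⟨i', j'⟩) heq <;> simp only [starCell, Prod.mk.injEq] at heq <;>
    obtain ⟨rfl, hrow⟩ := heq
  · rfl
  · exact absurd hrow.symm (Fin.succAbove_ne _ _)
  · exact absurd hrow (Fin.succAbove_ne _ _)
  · rw [Fin.succAbove_right_injective hrow]

end Grid

section Cycle

variable {m : ℕ}

/-- The vertex following `v_i` on the cycle. -/
abbrev cycleSucc (i : Fin m) : Fin m := (cycleEnds m i).2

theorem val_cycleSucc (i : Fin m) :
    (i.val + 1 < m ∧ (cycleSucc i).val = i + 1) ∨ (i.val + 1 = m ∧ (cycleSucc i).val = 0) := by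
  rcases (Nat.add_one_le_of_lt i.is_lt).lt_or_eq with hlt | heq
  · exact .inl ⟨hlt, Nat.mod_eq_of_lt hlt⟩
  · exact .inr ⟨heq, (congrArg (· % m) heq).trans (Nat.mod_self m)⟩

theorem cycleSucc_injective : Function.Injective (cycleSucc : Fin m → Fin m) := by
  intro i j hij
  have hi := val_cycleSucc i
  have hj := val_cycleSucc j
  rw [hij] at hi
  exact Fin.ext (by omega)

/-- The labels of the odd cycle `v_0, v_1, …`: going around the cycle twice by steps of two, the
vertices are labeled `1, 2, …, m`. -/
def oddCycleLabel (m : ℕ) (i : Fin m) : ℕ :=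
  if i.val % 2 = 0 then i / 2 + 1 else (m + 1) / 2 + i / 2 + 1

theorem oddCycleLabel_add_oddCycleLabel_cycleSucc (hm : Odd m) (i : Fin m) :
    oddCycleLabel m i + oddCycleLabel m (cycleSucc i) = (m + 3) / 2 + cycleSucc i := by
  have hsucc := val_cycleSucc i
  simp only [oddCycleLabel]
  grind

theorem isSuperEdgeMagic_oddCycle (hm : Odd m) :
    IsSuperEdgeMagic (cycleEnds m) (oddCycleLabel m) (fun i => 2 * m - cycleSucc i)
      ((5 * m + 3) / 2) := by
  refine .of_injective (fun i j hij => ?_) (fun i j hij => ?_) ?_ ?_ fun i => ?_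
  · simp only [oddCycleLabel] at hij
    exact Fin.ext (by grind)
  · exact cycleSucc_injective (Fin.ext (by grind))
  · simp only [oddCycleLabel, Fintype.card_fin, mem_Ioc]
    grind
  · simp only [Fintype.card_fin, mem_Ioc]
    grind
  · have hsum := oddCycleLabel_add_oddCycleLabel_cycleSucc hm i
    have hfst : (cycleEnds m i).1 = i := rfl
    rw [hfst]
    grind

end Cycle

section Crown

variable {a k l m n : ℕ}

theorem card_crown : Fintype.card (Fin m ⊕ Fin m × Fin n) = m * (n + 1) := by
  simp only [Fintype.card_sum, Fintype.card_prod, Fintype.card_fin]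
  ring

/-- The vertex labels of the crown obtained from labels `fv` of the cycle and a row `d i` for each
cycle vertex `v_i`: the leaves of `v_i` share the column of the next cycle vertex. -/
def crownVertexLabel (fv : Fin m → ℕ) (d : Fin m → Fin (n + 1)) (v : Fin m ⊕ Fin m × Fin n) : ℕ :=
  gridLabel m fv (starCell d (v.map id (Prod.map cycleSucc id)))

/-- The edge labels of the crown matching `crownVertexLabel`, where `g i` is the smallest label
among the edges from `v_i` to `v_{i+1}` and to its leaves. Rows are reversed because an edge label
decreases as the labels of its ends grow. -/
def crownEdgeLabel (g : Fin m → ℕ) (d : Fin m → Fin (n + 1)) (e : Fin m ⊕ Fin m × Fin n) : ℕ :=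
  gridLabel m g ((starCell (d ∘ cycleSucc) e).map id Fin.rev)

theorem crownVertexLabel_injective {fv : Fin m → ℕ} (hfv : Function.Injective fv)
    (hmem : ∀ i, fv i ∈ Ioc a (a + m)) (d : Fin m → Fin (n + 1)) :
    Function.Injective (crownVertexLabel fv d) :=
  (gridLabel_injective hfv hmem).comp <| (starCell_injective d).comp <|
    Function.injective_id.sumMap (cycleSucc_injective.prodMap Function.injective_id)

theorem crownEdgeLabel_injective {g : Fin m → ℕ} (hg : Function.Injective g)
    (hmem : ∀ i, g i ∈ Ioc a (a + m)) (d : Fin m → Fin (n + 1)) :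
    Function.Injective (crownEdgeLabel g d) :=
  (gridLabel_injective hg hmem).comp <|
    (Function.injective_id.prodMap Fin.rev_injective).comp (starCell_injective _)

theorem crownVertexLabel_crownEnds_fst (fv : Fin m → ℕ) (d : Fin m → Fin (n + 1))
    (e : Fin m ⊕ Fin m × Fin n) :
    crownVertexLabel fv d (crownEnds m n e).1 =
      fv (starCell (d ∘ cycleSucc) e).1 + m * d (starCell (d ∘ cycleSucc) e).1 := by
  rcases e with i | ⟨i, j⟩ <;> rfl

theorem crownVertexLabel_crownEnds_snd (fv : Fin m → ℕ) (d : Fin m → Fin (n + 1))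
    (e : Fin m ⊕ Fin m × Fin n) :
    crownVertexLabel fv d (crownEnds m n e).2 =
      fv (cycleSucc (starCell (d ∘ cycleSucc) e).1) + m * (starCell (d ∘ cycleSucc) e).2 := by
  rcases e with i | ⟨i, j⟩ <;> rfl

theorem exists_crownLabel_sum_eq (fv g : Fin m → ℕ) (d : Fin m → Fin (n + 1))
    (e : Fin m ⊕ Fin m × Fin n) :
    ∃ i, crownVertexLabel fv d (crownEnds m n e).1 + crownEdgeLabel g d e +
      crownVertexLabel fv d (crownEnds m n e).2 =
        fv i + (g i + m * d i) + fv (cycleSucc i) + m * n := by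
  rw [crownVertexLabel_crownEnds_fst, crownVertexLabel_crownEnds_snd]
  simp only [crownEdgeLabel, gridLabel, Prod.map_fst, Prod.map_snd, id]
  generalize starCell (d ∘ cycleSucc) e = c
  have hrev : m * c.2.rev + m * c.2 = m * n := by
    rw [← mul_add, Fin.val_rev, Nat.add_sub_add_right, Nat.sub_add_cancel c.2.is_le]
  exact ⟨c.1, by omega⟩

theorem IsSuperEdgeMagic.crown {fv fe : Fin m → ℕ} (h : IsSuperEdgeMagic (cycleEnds m) fv fe k)
    {g : Fin m → ℕ} {d : Fin m → Fin (n + 1)}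
    (hg : ∀ i, g i ∈ Ioc (m * (n + 1)) (m * (n + 1) + m))
    (hgd : ∀ i, g i + m * d i = fe i + l) :
    IsSuperEdgeMagic (crownEnds m n) (crownVertexLabel fv d) (crownEdgeLabel g d)
      (k + l + m * n) := by
  have hfv : ∀ i, fv i ∈ Ioc 0 (0 + m) := by
    simpa only [Fintype.card_fin, zero_add] using h.vertex_mem_Ioc
  have hfe : ∀ i, fe i ∈ Ioc m (m + m) := by
    simpa only [Fintype.card_fin] using h.edge_mem_Ioc
  have hg_inj : Function.Injective g := by
    intro i j hij
    have hgrid : gridLabel m fe (i, d j) = gridLabel m fe (j, d i) := by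
      have hi := hgd i
      have hj := hgd j
      simp only [gridLabel]
      omega
    exact congrArg Prod.fst (gridLabel_injective h.injective_edge hfe hgrid)
  refine .of_injective (crownVertexLabel_injective h.injective_vertex hfv d)
    (crownEdgeLabel_injective hg_inj hg d) (fun v => ?_) (fun e => ?_) fun e => ?_
  · rw [card_crown, ← zero_add (m * (n + 1))]
    exact gridLabel_mem_Ioc hfv _
  · rw [card_crown]
    exact gridLabel_mem_Ioc hg _
  · obtain ⟨i, hi⟩ := exists_crownLabel_sum_eq fv g d e
    have hsum : fv i + fe i + fv (cycleSucc i) = k := h.1.2.2 i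
    rw [hi, hgd, ← hsum]
    ring

theorem IsSuperEdgeMagic.exists_crown {fv fe : Fin m → ℕ}
    (h : IsSuperEdgeMagic (cycleEnds m) fv fe k) (hl : l ≤ m * n) :
    ∃ gv ge, IsSuperEdgeMagic (crownEnds m n) gv ge (k + 2 * (m * n) + l) := by
  have hfe : ∀ i, fe i + m * n ∈ Ioc (m * (n + 1)) (m * (n + 1) + m) := by
    intro i
    have hi := h.edge_mem_Ioc i
    simp only [Fintype.card_fin, mem_Ioc, mul_add_one] at hi ⊢
    omega
  choose g hg d hgd using fun i => exists_add_mul_eq_add (hfe i) hl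
  have hcrown := h.crown (l := m * n + l) hg fun i => (hgd i).trans (add_assoc ..)
  exact ⟨_, _, by convert hcrown using 1; ring⟩

theorem exists_isSuperEdgeMagic_crown (hm : Odd m) (hlow : 2 * (m * n) + (5 * m + 3) / 2 ≤ k)
    (hhigh : k ≤ 3 * (m * n) + (5 * m + 3) / 2) :
    ∃ fv fe, IsSuperEdgeMagic (crownEnds m n) fv fe k := by
  obtain ⟨l, rfl⟩ := Nat.exists_eq_add_of_le hlow
  rw [add_comm (2 * (m * n))]
  exact (isSuperEdgeMagic_oddCycle hm).exists_crown (by omega)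

theorem crown_pq_perfectEdgeMagic_general (m n : ℕ) (hm : Odd m) (hn : 1 ≤ n) (k : ℕ)
    (hlow : 2 * m * n + (5 * m + 3) / 2 ≤ k) (hhigh : k ≤ 4 * m * n + (7 * m + 3) / 2) :
    ∃ fv fe, IsEdgeMagic (crownEnds m n) fv fe k := by
  rw [mul_assoc] at hlow hhigh
  have hmn : m ≤ m * n := Nat.le_mul_of_pos_right m hn
  have hcard := card_crown (m := m) (n := n)
  rw [mul_add_one] at hcard
  have hsuper := fun k => exists_isSuperEdgeMagic_crown (n := n) (k := k) hm
  obtain ⟨h, rfl⟩ := hm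
  by_cases hk_super : k ≤ 3 * ((2 * h + 1) * n) + (5 * (2 * h + 1) + 3) / 2
  · obtain ⟨fv, fe, hf⟩ := hsuper k hlow hk_super
    exact ⟨fv, fe, hf.1⟩
  by_cases hk_compl : 3 * ((2 * h + 1) * n) + (7 * (2 * h + 1) + 3) / 2 ≤ k
  · obtain ⟨fv, fe, hf⟩ := hsuper
      (6 * ((2 * h + 1) * n) + 6 * (2 * h + 1) + 3 - k) (by omega) (by omega)
    exact ⟨_, _, hf.1.complement (by omega)⟩
  -- Odd and even vertex labels turn a valence `s` into `2 * (s - |V| - 1)` and its successor.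
  obtain ⟨fv, fe, hf⟩ := hsuper (k / 2 + (2 * h + 1) * n + (2 * h + 1) + 1) (by omega) (by omega)
  rcases Nat.even_or_odd' k with ⟨s, rfl | rfl⟩
  · exact ⟨_, _, hf.odd_vertex le_rfl (Nat.le_succ _) (by omega)⟩
  · exact ⟨_, _, hf.even_vertex le_rfl (Nat.le_succ _) (by omega)⟩

end Crown

/-- for m = pq a product of two distinct odd primes and n ≥ 1,
the crown C_m ⊙ K̄_n is perfect edge-magic: every integer k with
2mn + (5m+3)/2 ≤ k ≤ 4mn + (7m+3)/2 is the valence of an edge-magic labeling. -/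
theorem crown_pq_perfectEdgeMagic (p q n m : ℕ) (hp : p.Prime) (hq : q.Prime)
    (hop : Odd p) (hoq : Odd q) (hne : p ≠ q) (hn : 1 ≤ n) (hm : m = p * q) :
    ∀ k : ℕ, 2 * m * n + (5 * m + 3) / 2 ≤ k → k ≤ 4 * m * n + (7 * m + 3) / 2 →
      ∃ fv fe, IsEdgeMagic (crownEnds m n) fv fe k := by
  subst hm
  exact crown_pq_perfectEdgeMagic_general (p * q) n (hop.mul hoq) hn
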